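/- arXiv:math/9911160 — 2 statements merged into one kernel-verified Lean document; each statement's English description precedes it below -/
import Mathlib

section
/- If a polynomial P on ℝⁿ vanishes on the zero set of a nonzero harmonic polynomial Ψ on ℝⁿ with real coefficients, and Ψ is irreducible over ℝ, then Ψ divides P in ℝ[x₁,…,xₙ]. -/
open MvPolynomial

/-- The Laplacian of a polynomial on `ℝⁿ`. -/
noncomputable def mvLap {n : ℕ} (P : MvPolynomial (Fin n) ℝ) : MvPolynomial (Fin n) ℝ :=
  ∑ i : Fin n, pderiv i (pderiv i P)

/-!
A nonconstant harmonic polynomial `Ψ` changes sign. Otherwise, up to replacing `Ψ` by `-Ψ`, its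
leading form is nonnegative, and it is harmonic and homogeneous of positive degree. By Euler's
identity and Gaussian integration by parts it has integral zero against the standard Gaussian
measure, so it vanishes, which is absurd.

If an irreducible `Ψ` changes sign, then it changes sign along some line parallel to a coordinate
axis, say the `i`-th. If `Ψ` did not divide `P`, the resultant of `Ψ` and `P` with respect to the
variable `i` would be a nonzero polynomial in the other variables. By the intermediate value theorem
`Ψ` has a zero on every nearby parallel line; there `P` vanishes too, hence so does the resultant.
Thus the resultant vanishes on a nonempty open set, which is absurd.
-/

open MeasureTheory ProbabilityTheory Filter Topology
open scoped NNReal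

section GaussianReal

lemma isOpenPosMeasure_gaussianReal (μ : ℝ) {v : ℝ≥0} (hv : v ≠ 0) :
    (gaussianReal μ v).IsOpenPosMeasure :=
  (gaussianReal_absolutelyContinuous' μ hv).isOpenPosMeasure

lemma integrable_pow_gaussianReal (μ : ℝ) (v : ℝ≥0) (k : ℕ) :
    Integrable (fun x ↦ x ^ k) (gaussianReal μ v) :=
  integrable_pow_of_mem_interior_integrableExpSet (X := id) (by simp) k

lemma integrable_gaussianReal_iff {μ : ℝ} {v : ℝ≥0} (hv : v ≠ 0) {f : ℝ → ℝ} :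
    Integrable f (gaussianReal μ v) ↔ Integrable fun x ↦ gaussianPDFReal μ v x * f x := by
  rw [gaussianReal_of_var_ne_zero μ hv, integrable_withDensity_iff_integrable_smul'
    (measurable_gaussianPDF μ v) (ae_of_all _ fun _ ↦ gaussianPDF_lt_top)]
  simp only [toReal_gaussianPDF, smul_eq_mul]

lemma hasDerivAt_gaussianPDFReal (μ : ℝ) (v : ℝ≥0) (x : ℝ) :
    HasDerivAt (gaussianPDFReal μ v) (-((x - μ) / v) * gaussianPDFReal μ v x) x := by
  have hexponent : HasDerivAt (fun y ↦ -(y - μ) ^ 2 / (2 * v)) (-((x - μ) / v)) x := by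
    convert! ((((hasDerivAt_id x).sub_const μ).pow 2).neg.div_const (2 * (v : ℝ))) using 1
    simp only [id_eq, Nat.cast_ofNat, Nat.add_one_sub_one, pow_one, mul_one]
    rw [← mul_neg, mul_div_mul_left _ _ two_ne_zero, neg_div]
  convert! hexponent.exp.const_mul (√(2 * Real.pi * v))⁻¹ using 1
  rw [gaussianPDFReal]
  ring

theorem integral_sub_mul_gaussianReal {μ : ℝ} {v : ℝ≥0} {f f' : ℝ → ℝ}
    (hderiv : ∀ x, HasDerivAt f (f' x) x) (hf : Integrable f (gaussianReal μ v))
    (hf' : Integrable f' (gaussianReal μ v))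
    (hmul : Integrable (fun x ↦ (x - μ) * f x) (gaussianReal μ v)) :
    ∫ x, (x - μ) * f x ∂gaussianReal μ v = v * ∫ x, f' x ∂gaussianReal μ v := by
  obtain rfl | hv := eq_or_ne v 0
  · simp
  have hv' : (v : ℝ) ≠ 0 := NNReal.coe_ne_zero.2 hv
  rw [integrable_gaussianReal_iff hv] at hf hf' hmul
  simp only [integral_gaussianReal_eq_integral_smul hv, smul_eq_mul]
  have hderiv_mul (x : ℝ) : HasDerivAt (fun x ↦ gaussianPDFReal μ v x * f x)
      (gaussianPDFReal μ v x * f' x - (v : ℝ)⁻¹ * (gaussianPDFReal μ v x * ((x - μ) * f x))) x := by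
    convert! (hasDerivAt_gaussianPDFReal μ v x).mul (hderiv x) using 1
    ring
  have hzero := integral_eq_zero_of_hasDerivAt_of_integrable hderiv_mul
    (hf'.sub (hmul.const_mul _)) hf
  rw [integral_sub hf' (hmul.const_mul _), integral_const_mul, sub_eq_zero] at hzero
  rw [hzero, mul_inv_cancel_left₀ hv']

lemma integral_pow_succ_gaussianReal (v : ℝ≥0) (k : ℕ) :
    ∫ x, x ^ (k + 1) ∂gaussianReal 0 v = v * (k * ∫ x, x ^ (k - 1) ∂gaussianReal 0 v) := by
  have hpow (x : ℝ) : (x - 0) * x ^ k = x ^ (k + 1) := by rw [sub_zero, pow_succ']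
  have hstein := integral_sub_mul_gaussianReal (μ := 0) (v := v) (hasDerivAt_pow k)
    (integrable_pow_gaussianReal 0 v k) ((integrable_pow_gaussianReal 0 v (k - 1)).const_mul _)
    (by simpa only [hpow] using integrable_pow_gaussianReal 0 v (k + 1))
  simpa only [hpow, integral_const_mul] using hstein

end GaussianReal

section PiMeasure

variable {σ : Type*} [Fintype σ] {μ : σ → Measure ℝ} [∀ i, SigmaFinite (μ i)]

lemma eval_monomial_eq_mul_prod {R : Type*} [CommSemiring R] (x : σ → R) (m : σ →₀ ℕ) (c : R) :
    eval x (monomial m c) = c * ∏ i, x i ^ m i := by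
  rw [eval_monomial, Finsupp.prod_fintype _ _ fun _ ↦ pow_zero _]

lemma integrable_eval_pi (hμ : ∀ i (k : ℕ), Integrable (fun t ↦ t ^ k) (μ i))
    (p : MvPolynomial σ ℝ) : Integrable (fun x ↦ eval x p) (Measure.pi μ) := by
  induction p using MvPolynomial.induction_on' with
  | monomial m c =>
    simp only [eval_monomial_eq_mul_prod]
    exact (Integrable.fintype_prod fun i ↦ hμ i (m i)).const_mul c
  | add p q hp hq =>
    simp only [map_add]
    exact hp.add hq

lemma integral_eval_monomial_pi (m : σ →₀ ℕ) (c : ℝ) :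
    ∫ x, eval x (monomial m c) ∂Measure.pi μ = c * ∏ i, ∫ t, t ^ m i ∂μ i := by
  simp only [eval_monomial_eq_mul_prod, integral_const_mul]
  rw [integral_fintype_prod_eq_prod fun i t ↦ t ^ m i]

end PiMeasure

section StandardGaussian

/-- The standard Gaussian measure on `σ → ℝ`, against which polynomials are integrated. It is the
product of one-dimensional Gaussians, so that moments of monomials factor over the coordinates. -/
noncomputable abbrev piGaussian (σ : Type*) [Fintype σ] : Measure (σ → ℝ) :=
  Measure.pi fun _ ↦ gaussianReal 0 1

variable {σ : Type*} [Fintype σ]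

instance isOpenPosMeasure_piGaussian : (piGaussian σ).IsOpenPosMeasure :=
  have := isOpenPosMeasure_gaussianReal 0 one_ne_zero
  inferInstance

lemma integrable_eval_piGaussian (p : MvPolynomial σ ℝ) :
    Integrable (fun x ↦ eval x p) (piGaussian σ) :=
  integrable_eval_pi (fun _ ↦ integrable_pow_gaussianReal 0 1) p

lemma integral_eval_sum_piGaussian {ι : Type*} (s : Finset ι) (p : ι → MvPolynomial σ ℝ) :
    ∫ x, eval x (∑ j ∈ s, p j) ∂piGaussian σ = ∑ j ∈ s, ∫ x, eval x (p j) ∂piGaussian σ := by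
  simp only [map_sum]
  exact integral_finsetSum s fun j _ ↦ integrable_eval_piGaussian (p j)

theorem integral_eval_X_mul_piGaussian (i : σ) (p : MvPolynomial σ ℝ) :
    ∫ x, eval x (X i * p) ∂piGaussian σ = ∫ x, eval x (pderiv i p) ∂piGaussian σ := by
  classical
  induction p using MvPolynomial.induction_on' with
  | monomial m c =>
    have hother : ∏ j ∈ Finset.univ.erase i,
          ∫ t, t ^ (Finsupp.single i 1 + m : σ →₀ ℕ) j ∂gaussianReal 0 1 =
        ∏ j ∈ Finset.univ.erase i, ∫ t, t ^ (m - Finsupp.single i 1 : σ →₀ ℕ) j ∂gaussianReal 0 1 :=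
      Finset.prod_congr rfl fun j hj ↦ by
        simp [Finsupp.single_eq_of_ne (Finset.ne_of_mem_erase hj)]
    rw [pderiv_monomial, X, monomial_mul, one_mul, integral_eval_monomial_pi,
      integral_eval_monomial_pi, mul_assoc, ← Finset.mul_prod_erase _ _ (Finset.mem_univ i),
      ← Finset.mul_prod_erase _ _ (Finset.mem_univ i), hother]
    simp [add_comm 1, integral_pow_succ_gaussianReal, mul_assoc]
  | add p q hp hq =>
    simp only [mul_add, map_add] at hp hq ⊢
    rw [integral_add, integral_add, hp, hq] <;>
      exact integrable_eval_piGaussian _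

end StandardGaussian

section Homogeneous

variable {σ R : Type*} [CommSemiring R]

lemma eval_smul_of_isHomogeneous {p : MvPolynomial σ R} {d : ℕ} (hp : p.IsHomogeneous d)
    (t : R) (x : σ → R) : eval (t • x) p = t ^ d * eval x p := by
  rw [eval_eq, eval_eq, Finset.mul_sum]
  refine Finset.sum_congr rfl fun m hm ↦ ?_
  have hdegree : ∑ i ∈ m.support, m i = d := by
    rw [← hp (mem_support_iff.1 hm), Pi.one_def, ← Finsupp.degree_eq_weight_one,
      Finsupp.degree_apply]
  simp only [Pi.smul_apply, smul_eq_mul, mul_pow, Finset.prod_mul_distrib,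
    Finset.prod_pow_eq_pow_sum, hdegree]
  ring

lemma eval_smul_eq_sum_homogeneousComponent (p : MvPolynomial σ R) (t : R) (x : σ → R) :
    eval (t • x) p =
      ∑ k ∈ Finset.range (p.totalDegree + 1), t ^ k * eval x (homogeneousComponent k p) := by
  conv_lhs => rw [← sum_homogeneousComponent p, map_sum]
  exact Finset.sum_congr rfl fun k _ ↦
    eval_smul_of_isHomogeneous (homogeneousComponent_isHomogeneous k p) t x

lemma homogeneousComponent_totalDegree_ne_zero {p : MvPolynomial σ R} (hp : p ≠ 0) :
    homogeneousComponent p.totalDegree p ≠ 0 := by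
  obtain ⟨m, hm, hdegree⟩ := Finset.exists_mem_eq_sup p.support (support_nonempty.2 hp)
    fun m ↦ m.sum fun _ e ↦ e
  refine ne_zero_iff.2 ⟨m, ?_⟩
  rw [coeff_homogeneousComponent, if_pos (show m.degree = p.totalDegree from hdegree.symm)]
  exact mem_support_iff.1 hm

-- `s ^ d * p (s⁻¹ • x)` is a polynomial in `s` whose value at `s = 0` is the leading form at `x`.
lemma eval_homogeneousComponent_totalDegree_nonneg {p : MvPolynomial σ ℝ}
    (hp : ∀ x, 0 ≤ eval x p) (x : σ → ℝ) :
    0 ≤ eval x (homogeneousComponent p.totalDegree p) := by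
  set d := p.totalDegree
  let q (s : ℝ) : ℝ :=
    ∑ k ∈ Finset.range (d + 1), s ^ (d - k) * eval x (homogeneousComponent k p)
  have hq_pos (s : ℝ) (hs : 0 < s) : q s = s ^ d * eval (s⁻¹ • x) p := by
    rw [eval_smul_eq_sum_homogeneousComponent, Finset.mul_sum]
    refine Finset.sum_congr rfl fun k hk ↦ ?_
    rw [pow_sub₀ s hs.ne' (Finset.mem_range_succ_iff.1 hk), inv_pow, mul_assoc]
  have hq_zero : q 0 = eval x (homogeneousComponent d p) := by
    have hlower : ∀ k ∈ Finset.range d,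
        (0 : ℝ) ^ (d - k) * eval x (homogeneousComponent k p) = 0 := fun k hk ↦ by
      rw [zero_pow (Nat.sub_ne_zero_of_lt (Finset.mem_range.1 hk)), zero_mul]
    simp [q, Finset.sum_range_succ, Finset.sum_eq_zero hlower]
  have hq_tendsto : Tendsto q (𝓝[>] 0) (𝓝 (q 0)) :=
    (show Continuous q by fun_prop).continuousWithinAt
  rw [← hq_zero]
  refine ge_of_tendsto hq_tendsto (eventually_mem_nhdsWithin.mono fun s hs ↦ ?_)
  rw [hq_pos s hs]
  exact mul_nonneg (pow_nonneg (le_of_lt hs) d) (hp _)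

end Homogeneous

section Harmonic

variable {n : ℕ} {p : MvPolynomial (Fin n) ℝ}

lemma coeff_mvLap (p : MvPolynomial (Fin n) ℝ) (m : Fin n →₀ ℕ) :
    coeff m (mvLap p) = ∑ i, coeff (m + Finsupp.single i 2) p * ((m i + 2) * (m i + 1)) := by
  rw [mvLap, coeff_sum]
  refine Finset.sum_congr rfl fun i _ ↦ ?_
  rw [coeff_pderiv, coeff_pderiv, add_assoc, ← Finsupp.single_add]
  simp only [Finsupp.add_apply, Finsupp.single_eq_same]
  push_cast
  ring

lemma mvLap_homogeneousComponent_eq_zero (hp : mvLap p = 0) (d : ℕ) :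
    mvLap (homogeneousComponent d p) = 0 := by
  ext m
  rw [coeff_mvLap]
  simp only [coeff_homogeneousComponent, map_add, Finsupp.degree_single]
  by_cases hm : m.degree + 2 = d
  · simp only [hm, if_true, ← coeff_mvLap, hp]
  · simp [hm]

-- Euler's identity and integration by parts give `d * ∫ p = ∑ i, ∫ X i * ∂ᵢ p = ∫ Δ p`.
theorem integral_eval_eq_zero_of_isHomogeneous {d : ℕ} (hd : d ≠ 0) (hhom : p.IsHomogeneous d)
    (hp : mvLap p = 0) : ∫ x, eval x p ∂piGaussian (Fin n) = 0 := by
  have hmul : d * ∫ x, eval x p ∂piGaussian (Fin n) = 0 :=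
    calc d * ∫ x, eval x p ∂piGaussian (Fin n)
        = ∫ x, eval x (d • p) ∂piGaussian (Fin n) := by
          simp only [nsmul_eq_mul, map_mul, map_natCast, integral_const_mul]
      _ = ∫ x, eval x (∑ i, X i * pderiv i p) ∂piGaussian (Fin n) := by
          rw [hhom.sum_X_mul_pderiv]
      _ = ∫ x, eval x (mvLap p) ∂piGaussian (Fin n) := by
          simp only [mvLap, integral_eval_sum_piGaussian, integral_eval_X_mul_piGaussian]
      _ = 0 := by simp only [hp, map_zero, integral_zero]
  exact (mul_eq_zero.1 hmul).resolve_left (Nat.cast_ne_zero.2 hd)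

lemma eq_zero_of_isHomogeneous_of_mvLap_eq_zero_of_nonneg {d : ℕ} (hd : d ≠ 0)
    (hhom : p.IsHomogeneous d) (hp : mvLap p = 0) (hnonneg : ∀ x, 0 ≤ eval x p) : p = 0 := by
  by_contra hne
  obtain ⟨x, hx⟩ : ∃ x, eval x p ≠ 0 := by
    by_contra! hzero
    exact hne (MvPolynomial.funext fun x ↦ by rw [hzero x, map_zero])
  exact (integral_pos_of_integrable_nonneg_nonzero (MvPolynomial.continuous_eval p)
    (integrable_eval_piGaussian p) hnonneg hx).ne'
    (integral_eval_eq_zero_of_isHomogeneous hd hhom hp)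

theorem exists_eval_neg_of_mvLap_eq_zero (hp : mvLap p = 0) (hdeg : p.totalDegree ≠ 0) :
    ∃ x, eval x p < 0 := by
  by_contra! hnonneg
  have hne : p ≠ 0 := fun h ↦ hdeg (by rw [h, totalDegree_zero])
  exact homogeneousComponent_totalDegree_ne_zero hne <|
    eq_zero_of_isHomogeneous_of_mvLap_eq_zero_of_nonneg hdeg
      (homogeneousComponent_isHomogeneous _ p) (mvLap_homogeneousComponent_eq_zero hp _)
      (eval_homogeneousComponent_totalDegree_nonneg hnonneg)

lemma mvLap_neg (p : MvPolynomial (Fin n) ℝ) : mvLap (-p) = -mvLap p := by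
  simp only [mvLap, map_neg, Finset.sum_neg_distrib]

theorem exists_eval_pos_of_mvLap_eq_zero (hp : mvLap p = 0) (hdeg : p.totalDegree ≠ 0) :
    ∃ x, 0 < eval x p := by
  simpa only [map_neg, neg_lt_zero] using
    exists_eval_neg_of_mvLap_eq_zero (p := -p) (by rw [mvLap_neg, hp, neg_zero])
      (by rwa [totalDegree_neg])

end Harmonic

section Elimination

lemma resultant_ne_zero_of_irreducible_of_not_dvd {R : Type*} [CommRing R] [IsDomain R]
    [IsGCDMonoid R] {f g : Polynomial R} (hf : Irreducible f) (hdeg : f.natDegree ≠ 0)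
    (hfg : ¬f ∣ g) : f.resultant g ≠ 0 := by
  let K := FractionRing R
  have hinj : Function.Injective (algebraMap R K) := IsFractionRing.injective R K
  have hprim : f.IsPrimitive := hf.isPrimitive hdeg
  have hcoprime : IsCoprime (f.map (algebraMap R K)) (g.map (algebraMap R K)) :=
    (hprim.irreducible_iff_irreducible_map_fraction_map.1 hf).coprime_iff_not_dvd.2
      fun h ↦ hfg (hprim.dvd_of_fraction_map_dvd_fraction_map h)
  intro hzero
  have hzero' : (f.map (algebraMap R K)).resultant (g.map (algebraMap R K)) = 0 := by
    rw [Polynomial.natDegree_map_eq_of_injective hinj,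
      Polynomial.natDegree_map_eq_of_injective hinj, Polynomial.resultant_map_map, hzero, map_zero]
  exact (Polynomial.resultant_eq_zero_iff.1 hzero').2 hcoprime

variable {σ R : Type*} [DecidableEq σ]

/-- A multivariate polynomial viewed as a univariate polynomial in the variable `i`, with
coefficients in the polynomials in the other variables. -/
noncomputable def isolateVar (R : Type*) [CommSemiring R] (i : σ) :
    MvPolynomial σ R ≃ₐ[R] Polynomial (MvPolynomial {j // j ≠ i} R) :=
  (renameEquiv R (Equiv.optionSubtypeNe i).symm).trans (optionEquivLeft R {j // j ≠ i})

lemma eval_eval_isolateVar [CommSemiring R] (i : σ) (p : MvPolynomial σ R) (x : σ → R) :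
    ((isolateVar R i p).map (eval fun j : {j // j ≠ i} ↦ x j)).eval (x i) = eval x p := by
  have hx : (fun k : Option {j // j ≠ i} ↦ k.elim (x i) fun j ↦ x j) =
      x ∘ Equiv.optionSubtypeNe i := by
    funext k
    cases k <;> simp
  rw [isolateVar, AlgEquiv.trans_apply, renameEquiv_apply, ← optionEquivLeft_elim_eval, hx,
    eval_rename, Function.comp_assoc, Equiv.self_comp_symm, Function.comp_id]

lemma eval_update_of_natDegree_isolateVar_eq_zero [CommSemiring R] {i : σ} {p : MvPolynomial σ R}
    (hp : (isolateVar R i p).natDegree = 0) (x : σ → R) (t : R) :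
    eval (Function.update x i t) p = eval x p := by
  have hne (j : {j // j ≠ i}) : Function.update x i t j = x j := Function.update_of_ne j.2 t x
  rw [← eval_eval_isolateVar i p, ← eval_eval_isolateVar i p,
    Polynomial.eq_C_of_natDegree_eq_zero hp]
  simp only [hne, Polynomial.map_C, Polynomial.eval_C]

lemma exists_eliminant [CommRing R] [IsDomain R] [UniqueFactorizationMonoid R] {i : σ}
    {p q : MvPolynomial σ R} (hp : Irreducible p) (hdeg : (isolateVar R i p).natDegree ≠ 0)
    (hpq : ¬p ∣ q) :
    ∃ r : MvPolynomial {j // j ≠ i} R, r ≠ 0 ∧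
      ∀ x : σ → R, eval x p = 0 → eval x q = 0 → eval (fun j : {j // j ≠ i} ↦ x j) r = 0 := by
  have hirr : Irreducible (isolateVar R i p) := (MulEquiv.irreducible_iff (isolateVar R i)).2 hp
  have hndvd : ¬isolateVar R i p ∣ isolateVar R i q := fun h ↦
    hpq ((map_dvd_iff (isolateVar R i)).1 h)
  obtain ⟨u, v, -, -, hbezout⟩ := Polynomial.exists_mul_add_mul_eq_C_resultant
    (isolateVar R i p) (isolateVar R i q) le_rfl le_rfl (Or.inl hdeg)
  refine ⟨_, resultant_ne_zero_of_irreducible_of_not_dvd hirr hdeg hndvd, fun x hpx hqx ↦ ?_⟩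
  have heval := congrArg (fun f ↦ (f.map (eval fun j : {j // j ≠ i} ↦ x j)).eval (x i)) hbezout
  simpa only [Polynomial.map_add, Polynomial.map_mul, Polynomial.eval_add, Polynomial.eval_mul,
    eval_eval_isolateVar, hpx, hqx, zero_mul, add_zero, Polynomial.map_C, Polynomial.eval_C]
    using heval.symm

end Elimination

section SignChange

lemma dense_setOf_eval_ne_zero {σ R : Type*} [CommRing R] [IsDomain R] [TopologicalSpace R]
    [T1Space R] [∀ r : R, (𝓝[≠] r).NeBot] {p : MvPolynomial σ R} (hp : p ≠ 0) :
    Dense {x | eval x p ≠ 0} := by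
  rw [dense_iff_inter_open]
  rintro U hU ⟨a, ha⟩
  by_contra hempty
  obtain ⟨I, -, box, hbox, hboxU⟩ := mem_pi.1 (nhds_pi (a := a) ▸ hU.mem_nhds ha)
  refine hp (funext_set box (fun i ↦ infinite_of_mem_nhds (a i) (hbox i)) fun x hx ↦ ?_)
  by_contra hpx
  exact hempty ⟨x, hboxU fun i _ ↦ hx i trivial, by simpa using hpx⟩

variable {σ : Type*}

theorem dvd_of_eval_neg_of_eval_update_pos [DecidableEq σ] {p q : MvPolynomial σ ℝ}
    (hp : Irreducible p) (hpq : ∀ x, eval x p = 0 → eval x q = 0) {a : σ → ℝ} {i : σ} {t : ℝ}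
    (hneg : eval a p < 0) (hpos : 0 < eval (Function.update a i t) p) : p ∣ q := by
  by_contra hndvd
  have hdeg : (isolateVar ℝ i p).natDegree ≠ 0 := fun h ↦
    (eval_update_of_natDegree_isolateVar_eq_zero h a t ▸ hpos).not_gt hneg
  obtain ⟨r, hr, hr_eval⟩ := exists_eliminant hp hdeg hndvd
  have hr_zero (x : σ → ℝ) (hx : eval x p < 0) (hxt : 0 < eval (Function.update x i t) p) :
      eval x (rename (↑) r) = 0 := by
    have hcont : Continuous fun s ↦ eval (Function.update x i s) p :=
      (MvPolynomial.continuous_eval p).comp (continuous_const.update i continuous_id)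
    obtain ⟨s, hs⟩ := mem_range_of_exists_le_of_exists_ge (c := 0) hcont
      ⟨x i, by rw [Function.update_eq_self]; exact hx.le⟩ ⟨t, hxt.le⟩
    have hne (j : {j // j ≠ i}) : Function.update x i s j = x j := Function.update_of_ne j.2 s x
    simpa only [hne, eval_rename, Function.comp_def] using hr_eval _ hs (hpq _ hs)
  have hopen : IsOpen {x | eval x p < 0 ∧ 0 < eval (Function.update x i t) p} :=
    (isOpen_lt (MvPolynomial.continuous_eval p) continuous_const).inter
      (isOpen_lt continuous_const
        ((MvPolynomial.continuous_eval p).comp (continuous_id.update i continuous_const)))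
  have hr_rename : rename ((↑) : {j // j ≠ i} → σ) r ≠ 0 :=
    (map_ne_zero_iff _ (rename_injective _ Subtype.val_injective)).2 hr
  obtain ⟨x, ⟨hx, hxt⟩, hrx⟩ :=
    (dense_setOf_eval_ne_zero hr_rename).inter_open_nonempty _ hopen ⟨a, hneg, hpos⟩
  exact hrx (hr_zero x hx hxt)

lemma exists_translate_eval_ne_zero {p : MvPolynomial σ ℝ} {a b : σ → ℝ} (hneg : eval a p < 0)
    (hpos : 0 < eval b p) (c : σ → ℝ) :
    ∃ w, eval (a + w) p < 0 ∧ 0 < eval (b + w) p ∧ eval (c + w) p ≠ 0 := by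
  have hp : p ≠ 0 := by
    rintro rfl
    simp at hneg
  have hcont (y : σ → ℝ) : Continuous fun z ↦ eval (y + (z - c)) p :=
    (MvPolynomial.continuous_eval p).comp (by fun_prop)
  have hopen : IsOpen {z | eval (a + (z - c)) p < 0 ∧ 0 < eval (b + (z - c)) p} :=
    (isOpen_lt (hcont a) continuous_const).inter (isOpen_lt continuous_const (hcont b))
  obtain ⟨z, ⟨hza, hzb⟩, hz⟩ := (dense_setOf_eval_ne_zero hp).inter_open_nonempty _ hopen
    ⟨c, by simpa using hneg, by simpa using hpos⟩
  exact ⟨z - c, hza, hzb, by simpa using hz⟩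

-- Change one coordinate at a time from `a` to `b`; a small translation of the whole configuration
-- keeps the intermediate point off the zero set of `p`.
lemma exists_eval_neg_eval_update_pos_of_eqOn_compl [DecidableEq σ] {p : MvPolynomial σ ℝ}
    (s : Finset σ) {a b : σ → ℝ} (hab : ∀ j ∉ s, a j = b j) (hneg : eval a p < 0)
    (hpos : 0 < eval b p) :
    ∃ (c : σ → ℝ) (i : σ) (t : ℝ), eval c p < 0 ∧ 0 < eval (Function.update c i t) p := by
  induction s using Finset.induction_on generalizing a b with
  | empty =>
    obtain rfl : a = b := funext fun j ↦ hab j (Finset.notMem_empty j)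
    exact absurd hneg hpos.not_gt
  | insert i s _ ih =>
    obtain ⟨w, hneg', hpos', hne⟩ :=
      exists_translate_eval_ne_zero hneg hpos (Function.update a i (b i))
    obtain hmid | hmid := hne.lt_or_gt
    · refine ih (fun j hj ↦ ?_) hmid hpos'
      obtain rfl | hji := eq_or_ne j i
      · simp
      · simp [hji, hab j (by simp [hji, hj])]
    · refine ⟨a + w, i, b i + w i, hneg', ?_⟩
      rwa [Function.update_add, Function.update_eq_self]

theorem dvd_of_eval_neg_of_eval_pos [Finite σ] {p q : MvPolynomial σ ℝ} (hp : Irreducible p)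
    (hpq : ∀ x, eval x p = 0 → eval x q = 0) {a b : σ → ℝ} (hneg : eval a p < 0)
    (hpos : 0 < eval b p) : p ∣ q := by
  classical
  have := Fintype.ofFinite σ
  obtain ⟨c, i, t, hc, hct⟩ := exists_eval_neg_eval_update_pos_of_eqOn_compl Finset.univ
    (fun j hj ↦ absurd (Finset.mem_univ j) hj) hneg hpos
  exact dvd_of_eval_neg_of_eval_update_pos hp hpq hc hct

end SignChange

/-- If a polynomial `P` on `ℝⁿ` vanishes on the zero set of a nonzero (nonconstant)
harmonic polynomial `Ψ` which is irreducible over `ℝ`, then `Ψ` divides `P`. -/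
theorem stmt0 {n : ℕ} (Ψ P : MvPolynomial (Fin n) ℝ)
    (hharm : mvLap Ψ = 0) (hnonconst : 0 < Ψ.totalDegree) (hirr : Irreducible Ψ)
    (hvan : ∀ x : Fin n → ℝ, eval x Ψ = 0 → eval x P = 0) :
    Ψ ∣ P := by
  obtain ⟨a, hneg⟩ := exists_eval_neg_of_mvLap_eq_zero hharm hnonconst.ne'
  obtain ⟨b, hpos⟩ := exists_eval_pos_of_mvLap_eq_zero hharm hnonconst.ne'
  exact dvd_of_eval_neg_of_eval_pos hirr hvan hneg hpos
end

section
/- Let Ψ(∂) be the differential operator associated to a homogeneous polynomial Ψ of degree m on ℝⁿ, and let φ(x) = g(|x|²) be a smooth radial function. If Ψ is harmonic, then Ψ(∂)φ(x) = Ψ(x) · h(|x|²) for some smooth function h depending on g and m. -/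
open MvPolynomial

/-- The `i`-th partial derivative of a function on `ℝⁿ`. -/
noncomputable def pd {n : ℕ} (i : Fin n) (f : EuclideanSpace ℝ (Fin n) → ℝ) :
    EuclideanSpace ℝ (Fin n) → ℝ :=
  fun x => fderiv ℝ f x (EuclideanSpace.single i 1)

/-- The differential monomial `∂^m = ∏ᵢ ∂ᵢ^(m i)` applied to a function. -/
noncomputable def monOp {n : ℕ} (m : Fin n →₀ ℕ) :
    (EuclideanSpace ℝ (Fin n) → ℝ) → (EuclideanSpace ℝ (Fin n) → ℝ) :=
  (List.ofFn fun i : Fin n => (pd i)^[m i]).foldr (· ∘ ·) id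

/-- The constant-coefficient differential operator `P(∂)` associated to a polynomial `P`,
obtained by substituting `∂/∂xᵢ` for `xᵢ`. -/
noncomputable def polyOp {n : ℕ} (P : MvPolynomial (Fin n) ℝ)
    (f : EuclideanSpace ℝ (Fin n) → ℝ) : EuclideanSpace ℝ (Fin n) → ℝ :=
  fun x => ∑ m ∈ P.support, P.coeff m * monOp m f x

/-!
Multiplying `P` by `X i` amounts to differentiating `P(∂)[g(|x|²)]` in the direction `i`. Together
with the commutator `[Δᵏ, X i] = 2k ∂ᵢ Δᵏ⁻¹`, this gives by induction on the degree `d` of a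
homogeneous `P` Hobson's formula
`P(∂)[g(|x|²)] = ∑_{a + b = d} 2ᵇ / (2ᵃ a!) (Δᵃ P)(x) g⁽ᵇ⁾(|x|²)`.
For harmonic `P` only the term `a = 0` survives, so that `h = 2ᵈ g⁽ᵈ⁾`.
-/

section Laplacian

variable {σ R : Type*} [CommSemiring R]

lemma commute_pderiv (i j : σ) :
    Commute ((pderiv i).toLinearMap : Module.End R (MvPolynomial σ R))
      (pderiv j).toLinearMap := by
  refine LinearMap.ext fun P => MvPolynomial.ext _ _ fun m => ?_
  simp only [Module.End.mul_apply, Derivation.coeFn_coe, coeff_pderiv, add_right_comm m,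
    Finsupp.add_apply]
  obtain rfl | hij := eq_or_ne i j
  · rfl
  · simp only [Finsupp.single_eq_of_ne hij, Finsupp.single_eq_of_ne hij.symm, add_zero]
    ring

variable [Fintype σ]

/-- The Laplacian `∑ i, ∂ᵢ²` as an endomorphism of the module of polynomials, so that its powers
are again linear. On real polynomials in `Fin n` variables it is `mvLap`. -/
noncomputable def mvLaplacian : Module.End R (MvPolynomial σ R) :=
  ∑ i, (pderiv i).toLinearMap ^ 2

lemma mvLaplacian_apply (P : MvPolynomial σ R) :
    mvLaplacian P = ∑ i, pderiv i (pderiv i P) := by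
  simp [mvLaplacian, pow_two]

lemma commute_mvLaplacian_pderiv (i : σ) :
    Commute (mvLaplacian : Module.End R (MvPolynomial σ R)) (pderiv i).toLinearMap :=
  Commute.sum_left _ _ _ fun j _ => (commute_pderiv j i).pow_left 2

lemma mvLaplacian_X_mul (i : σ) (P : MvPolynomial σ R) :
    mvLaplacian (X i * P) = X i * mvLaplacian P + 2 • pderiv i P := by
  classical
  have h_summand (j : σ) : pderiv j (pderiv j (X i * P)) =
      X i * pderiv j (pderiv j P) + if j = i then 2 • pderiv i P else 0 := by
    split_ifs with hji
    · subst hji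
      simp only [pderiv_mul, pderiv_X_self, map_add, pderiv_one]
      ring
    · simp [pderiv_X_of_ne (Ne.symm hji)]
  simp only [mvLaplacian_apply, h_summand, Finset.sum_add_distrib, Finset.mul_sum,
    Finset.sum_ite_eq', Finset.mem_univ, if_true]

lemma mvLaplacian_pow_X_mul (i : σ) (k : ℕ) (P : MvPolynomial σ R) :
    (mvLaplacian ^ k) (X i * P) =
      X i * (mvLaplacian ^ k) P + (2 * k) • pderiv i ((mvLaplacian ^ (k - 1)) P) := by
  induction k with
  | zero => simp
  | succ k ih =>
    have h_comm : mvLaplacian (pderiv i ((mvLaplacian ^ (k - 1)) P)) =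
        pderiv i (mvLaplacian ((mvLaplacian ^ (k - 1)) P)) :=
      LinearMap.congr_fun (commute_mvLaplacian_pderiv i).eq _
    rw [pow_succ', Module.End.mul_apply, ih, map_add, mvLaplacian_X_mul, map_nsmul, h_comm]
    rcases k with _ | k
    · simp
    · simp only [Nat.add_sub_cancel, ← Module.End.mul_apply, ← pow_succ', add_assoc, ← add_smul]
      congr 2
      ring

lemma isHomogeneous_mvLaplacian {P : MvPolynomial σ R} {d : ℕ} (hP : P.IsHomogeneous d) :
    (mvLaplacian P).IsHomogeneous (d - 1 - 1) := by
  rw [mvLaplacian_apply]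
  exact IsHomogeneous.sum _ _ _ fun i _ => hP.pderiv.pderiv

lemma mvLaplacian_pow_eq_zero_of_isHomogeneous {P : MvPolynomial σ R} {d k : ℕ}
    (hP : P.IsHomogeneous d) (hdk : d < k) : (mvLaplacian ^ k) P = 0 := by
  induction k generalizing d P with
  | zero => exact absurd hdk d.not_lt_zero
  | succ k ih =>
    rw [pow_succ, Module.End.mul_apply]
    rcases d with _ | d
    · have h_const : P = C (coeff 0 P) :=
        totalDegree_eq_zero_iff_eq_C.mp (Nat.le_zero.mp hP.totalDegree_le)
      rw [h_const, mvLaplacian_apply]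
      simp
    · exact ih (isHomogeneous_mvLaplacian hP) (by omega)

end Laplacian

section PartialDerivatives

section Gradient

variable {𝕜 σ : Type*} [NontriviallyNormedField 𝕜] [Fintype σ]

/-- The linear form `v ↦ ∑ i, c i * v i`: the derivative of a function whose partial derivatives
are `c`. -/
noncomputable def coordForm (c : σ → 𝕜) : (σ → 𝕜) →L[𝕜] 𝕜 :=
  ∑ i, c i • ContinuousLinearMap.proj i

lemma coordForm_apply (c v : σ → 𝕜) : coordForm c v = ∑ i, c i * v i := by
  simp [coordForm]

lemma coordForm_single [DecidableEq σ] (c : σ → 𝕜) (i : σ) :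
    coordForm c (Pi.single i 1) = c i := by
  simp [coordForm_apply, Pi.single_apply]

lemma hasFDerivAt_eval (Q : MvPolynomial σ 𝕜) (x : σ → 𝕜) :
    HasFDerivAt (fun y => eval y Q) (coordForm fun i => eval x (pderiv i Q)) x := by
  classical
  induction Q using MvPolynomial.induction_on with
  | C a =>
    simp only [eval_C]
    refine (hasFDerivAt_const a x).congr_fderiv (ContinuousLinearMap.ext fun v => ?_)
    simp [coordForm_apply]
  | add p q hp hq =>
    simp only [map_add]
    refine (hp.fun_add hq).congr_fderiv (ContinuousLinearMap.ext fun v => ?_)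
    simp [coordForm_apply, add_mul, Finset.sum_add_distrib]
  | mul_X p j hp =>
    simp only [map_mul, eval_X]
    refine (hp.fun_mul (hasFDerivAt_apply j x)).congr_fderiv (ContinuousLinearMap.ext fun v => ?_)
    simp [coordForm_apply, pderiv_X, Pi.single_apply, apply_ite (eval x), add_mul,
      Finset.sum_add_distrib, Finset.mul_sum, mul_assoc, add_comm]

lemma hasFDerivAt_eval_mul_comp_eval (Q S : MvPolynomial σ 𝕜) {u : 𝕜 → 𝕜} {u' : 𝕜} {x : σ → 𝕜}
    (hu : HasDerivAt u u' (eval x S)) :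
    HasFDerivAt (fun y => eval y Q * u (eval y S))
      (coordForm fun i =>
        eval x (pderiv i Q) * u (eval x S) + eval x (pderiv i S) * eval x Q * u') x := by
  refine ((hasFDerivAt_eval Q x).fun_mul
    (hu.comp_hasFDerivAt x (hasFDerivAt_eval S x))).congr_fderiv
    (ContinuousLinearMap.ext fun v => ?_)
  simp only [add_apply, smul_apply, coordForm_apply,
    smul_eq_mul, Finset.mul_sum, ← Finset.sum_add_distrib, Function.comp_apply]
  exact Finset.sum_congr rfl fun i _ => by ring

end Gradient

variable {n : ℕ}

lemma pd_sum {ι : Type*} (i : Fin n) (s : Finset ι)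
    {F : ι → EuclideanSpace ℝ (Fin n) → ℝ} {x : EuclideanSpace ℝ (Fin n)}
    (hF : ∀ p ∈ s, DifferentiableAt ℝ (F p) x) :
    pd i (fun y => ∑ p ∈ s, F p y) x = ∑ p ∈ s, pd i (F p) x := by
  simp only [pd, fderiv_fun_sum hF, sum_apply]

lemma pd_comp_ofLp (i : Fin n) {f : (Fin n → ℝ) → ℝ} {c : Fin n → ℝ}
    {x : EuclideanSpace ℝ (Fin n)} (hf : HasFDerivAt f (coordForm c) x.ofLp) :
    pd i (fun y => f y.ofLp) x = c i := by
  have h_comp := hf.comp x (PiLp.hasFDerivAt_ofLp 2 x)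
  rw [← coordForm_single c i, pd]
  exact congrArg (· (EuclideanSpace.single i 1)) h_comp.fderiv

lemma differentiableAt_eval_mul_comp_sum_sq (Q : MvPolynomial (Fin n) ℝ) {u : ℝ → ℝ}
    {x : EuclideanSpace ℝ (Fin n)} (hu : DifferentiableAt ℝ u (∑ i, x i ^ 2)) :
    DifferentiableAt ℝ (fun y : EuclideanSpace ℝ (Fin n) =>
      eval (fun i => y i) Q * u (∑ i, y i ^ 2)) x := by
  have h_eval : DifferentiableAt ℝ (fun y : EuclideanSpace ℝ (Fin n) => eval (fun i => y i) Q) x :=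
    (hasFDerivAt_eval Q x.ofLp).differentiableAt.comp x (PiLp.hasFDerivAt_ofLp 2 x).differentiableAt
  exact h_eval.fun_mul (hu.comp x (by fun_prop))

lemma pd_eval_mul_comp_sum_sq (i : Fin n) (Q : MvPolynomial (Fin n) ℝ) {u : ℝ → ℝ}
    {x : EuclideanSpace ℝ (Fin n)} (hu : DifferentiableAt ℝ u (∑ i, x i ^ 2)) :
    pd i (fun y => eval (fun i => y i) Q * u (∑ i, y i ^ 2)) x =
      eval (fun i => x i) (pderiv i Q) * u (∑ i, x i ^ 2) +
        2 * x i * eval (fun i => x i) Q * deriv u (∑ i, x i ^ 2) := by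
  have h_sum_sq (y : Fin n → ℝ) : eval y (∑ j, X j ^ 2) = ∑ j, y j ^ 2 := by simp
  have h_pderiv : eval x.ofLp (pderiv i (∑ j, X j ^ 2)) = 2 * x i := by
    simp [pderiv_X, Pi.single_apply]
  have h_deriv := hasFDerivAt_eval_mul_comp_eval Q (∑ j, X j ^ 2) (x := x.ofLp)
    ((h_sum_sq x.ofLp).symm ▸ hu.hasDerivAt)
  simp only [h_sum_sq] at h_deriv
  rw [pd_comp_ofLp i h_deriv, h_pderiv]

end PartialDerivatives

section Hobson

open Finset.HasAntidiagonal (antidiagonal)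

variable {n : ℕ}

/-- The coefficient `2 ^ b / (2 ^ a * a!)` of `Δᵃ P · g⁽ᵇ⁾` in Hobson's formula. -/
noncomputable def hobsonCoeff (p : ℕ × ℕ) : ℝ :=
  2 ^ p.2 / (2 ^ p.1 * (p.1.factorial : ℝ))

lemma hobsonCoeff_succ_right (a b : ℕ) : hobsonCoeff (a, b + 1) = 2 * hobsonCoeff (a, b) := by
  simp only [hobsonCoeff]
  ring

lemma hobsonCoeff_succ_left (a b : ℕ) :
    2 * (a + 1) * hobsonCoeff (a + 1, b) = hobsonCoeff (a, b) := by
  simp only [hobsonCoeff, Nat.factorial_succ]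
  push_cast
  field_simp
  ring

/-- The right-hand side `∑_{a + b = d} 2ᵇ / (2ᵃ a!) · (Δᵃ P)(x) · g⁽ᵇ⁾(|x|²)` of Hobson's formula
for `P(∂)[g(|x|²)]`, `P` homogeneous of degree `d`. It is linear in `P` for each fixed `d`. -/
noncomputable def hobsonSum (g : ℝ → ℝ) (d : ℕ) :
    MvPolynomial (Fin n) ℝ →ₗ[ℝ] EuclideanSpace ℝ (Fin n) → ℝ where
  toFun P x := ∑ p ∈ antidiagonal d, hobsonCoeff p *
    (eval (fun i => x i) ((mvLaplacian ^ p.1) P) * iteratedDeriv p.2 g (∑ i, x i ^ 2))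
  map_add' P Q := by
    ext x
    simp only [map_add, add_mul, mul_add, Finset.sum_add_distrib, Pi.add_apply]
  map_smul' c P := by
    ext x
    simp only [map_smul, smul_eval, Pi.smul_apply, smul_eq_mul, Finset.mul_sum, RingHom.id_apply]
    exact Finset.sum_congr rfl fun p _ => by ring

lemma hobsonSum_apply (g : ℝ → ℝ) (d : ℕ) (P : MvPolynomial (Fin n) ℝ)
    (x : EuclideanSpace ℝ (Fin n)) :
    hobsonSum g d P x = ∑ p ∈ antidiagonal d, hobsonCoeff p *
      (eval (fun i => x i) ((mvLaplacian ^ p.1) P) * iteratedDeriv p.2 g (∑ i, x i ^ 2)) :=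
  rfl

lemma hobsonSum_zero_one (g : ℝ → ℝ) :
    hobsonSum g 0 (1 : MvPolynomial (Fin n) ℝ) = fun x => g (∑ i, x i ^ 2) := by
  ext x
  simp [hobsonSum_apply, hobsonCoeff]

lemma pd_hobsonSum_apply (i : Fin n) {g : ℝ → ℝ} {d : ℕ} (hg : ContDiff ℝ (d + 1) g)
    (P : MvPolynomial (Fin n) ℝ) (x : EuclideanSpace ℝ (Fin n)) :
    pd i (hobsonSum g d P) x = ∑ p ∈ antidiagonal d, hobsonCoeff p *
      (eval (fun i => x i) (pderiv i ((mvLaplacian ^ p.1) P)) *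
          iteratedDeriv p.2 g (∑ i, x i ^ 2) +
        2 * x i * eval (fun i => x i) ((mvLaplacian ^ p.1) P) *
          iteratedDeriv (p.2 + 1) g (∑ i, x i ^ 2)) := by
  have h_diff (p : ℕ × ℕ) (hp : p ∈ antidiagonal d) :
      DifferentiableAt ℝ (iteratedDeriv p.2 g) (∑ i, x i ^ 2) := by
    have h_lt : p.2 < d + 1 := Finset.Nat.antidiagonal.snd_lt hp
    exact hg.differentiable_iteratedDeriv p.2 (by exact_mod_cast h_lt) _
  have h_term (p : ℕ × ℕ) (hp : p ∈ antidiagonal d) :=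
    differentiableAt_eval_mul_comp_sum_sq ((mvLaplacian ^ p.1) P) (h_diff p hp)
  refine (pd_sum i _ fun p hp => (h_term p hp).const_mul (hobsonCoeff p)).trans ?_
  refine Finset.sum_congr rfl fun p hp => ?_
  rw [iteratedDeriv_succ, ← pd_eval_mul_comp_sum_sq i _ (h_diff p hp), pd,
    fderiv_const_mul (h_term p hp)]
  rfl

lemma hobsonSum_X_mul_apply (i : Fin n) (g : ℝ → ℝ) {d : ℕ} {P : MvPolynomial (Fin n) ℝ}
    (hP : (mvLaplacian ^ (d + 1)) P = 0) (x : EuclideanSpace ℝ (Fin n)) :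
    hobsonSum g (d + 1) (X i * P) x = ∑ p ∈ antidiagonal d, hobsonCoeff p *
      (eval (fun i => x i) (pderiv i ((mvLaplacian ^ p.1) P)) *
          iteratedDeriv p.2 g (∑ i, x i ^ 2) +
        2 * x i * eval (fun i => x i) ((mvLaplacian ^ p.1) P) *
          iteratedDeriv (p.2 + 1) g (∑ i, x i ^ 2)) := by
  have h_split : hobsonSum g (d + 1) (X i * P) x =
      (∑ p ∈ antidiagonal (d + 1), hobsonCoeff p *
        (x i * eval (fun i => x i) ((mvLaplacian ^ p.1) P) *
          iteratedDeriv p.2 g (∑ i, x i ^ 2))) +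
      ∑ p ∈ antidiagonal (d + 1), 2 * p.1 * hobsonCoeff p *
        (eval (fun i => x i) (pderiv i ((mvLaplacian ^ (p.1 - 1)) P)) *
          iteratedDeriv p.2 g (∑ i, x i ^ 2)) := by
    rw [hobsonSum_apply, ← Finset.sum_add_distrib]
    refine Finset.sum_congr rfl fun p _ => ?_
    rw [mvLaplacian_pow_X_mul]
    simp only [map_add, map_mul, eval_X, nsmul_eq_mul, Nat.cast_mul, Nat.cast_ofNat, map_natCast,
      map_ofNat]
    ring
  rw [h_split, Finset.Nat.sum_antidiagonal_succ', Finset.Nat.sum_antidiagonal_succ]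
  simp only [hP, map_zero, mul_zero, zero_mul, zero_add, Nat.cast_zero, Nat.cast_add, Nat.cast_one,
    Nat.add_sub_cancel, ← Finset.sum_add_distrib, hobsonCoeff_succ_right, hobsonCoeff_succ_left]
  exact Finset.sum_congr rfl fun p _ => by ring

lemma pd_hobsonSum (i : Fin n) {g : ℝ → ℝ} {d : ℕ} (hg : ContDiff ℝ (d + 1) g)
    {P : MvPolynomial (Fin n) ℝ} (hP : P.IsHomogeneous d) :
    pd i (hobsonSum g d P) = hobsonSum g (d + 1) (X i * P) := by
  ext x
  rw [pd_hobsonSum_apply i hg,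
    hobsonSum_X_mul_apply i g (mvLaplacian_pow_eq_zero_of_isHomogeneous hP d.lt_succ_self)]

lemma isHomogeneous_prod_map_X {σ R : Type*} [CommSemiring R] (l : List σ) :
    ((l.map X).prod : MvPolynomial σ R).IsHomogeneous l.length := by
  induction l with
  | nil => exact isHomogeneous_one σ R
  | cons i l ih =>
    rw [List.map_cons, List.prod_cons, List.length_cons, add_comm]
    exact (isHomogeneous_X R i).mul ih

lemma foldr_pd_comp_sum_sq (l : List (Fin n)) {g : ℝ → ℝ} (hg : ContDiff ℝ l.length g) :
    l.foldr pd (fun y => g (∑ i, y i ^ 2)) = hobsonSum g l.length (l.map X).prod := by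
  induction l with
  | nil => exact (hobsonSum_zero_one g).symm
  | cons i l ih =>
    have hg' : ContDiff ℝ (l.length + 1) g := by exact_mod_cast hg
    rw [List.foldr_cons, ih (hg'.of_le le_self_add), List.map_cons, List.prod_cons,
      List.length_cons, pd_hobsonSum i hg' (isHomogeneous_prod_map_X l)]

/-- The nondecreasing word in the letters `Fin n` in which `i` occurs `m i` times. It records the
order in which `monOp m` composes the partial derivatives. -/
def multiIndexWord (m : Fin n →₀ ℕ) : List (Fin n) :=
  (List.ofFn fun i => List.replicate (m i) i).flatten

lemma length_multiIndexWord (m : Fin n →₀ ℕ) : (multiIndexWord m).length = m.degree := by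
  simp [multiIndexWord, Finsupp.degree_eq_sum, List.sum_ofFn, Function.comp_def]

lemma prod_map_X_multiIndexWord {R : Type*} [CommSemiring R] (m : Fin n →₀ ℕ) :
    ((multiIndexWord m).map X).prod = monomial (R := R) m 1 := by
  simp [multiIndexWord, List.map_flatten, List.prod_flatten, List.prod_ofFn, monomial_eq,
    Finsupp.prod_fintype, Function.comp_def]

lemma monOp_eq_foldr_pd (m : Fin n →₀ ℕ) (f : EuclideanSpace ℝ (Fin n) → ℝ) :
    monOp m f = (multiIndexWord m).foldr pd f := by
  have h_replicate (k : ℕ) (i : Fin n) (f : EuclideanSpace ℝ (Fin n) → ℝ) :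
      (List.replicate k i).foldr pd f = (pd i)^[k] f := by
    induction k with
    | zero => rfl
    | succ k ih => rw [List.replicate_succ, List.foldr_cons, ih, Function.iterate_succ_apply']
  simp only [monOp, multiIndexWord, List.foldr_flatten, List.ofFn_eq_map, List.foldr_map,
    h_replicate]
  induction List.finRange n with
  | nil => rfl
  | cons i l ih => exact congrArg (pd i)^[m i] ih

theorem polyOp_comp_sum_sq {m : ℕ} {Ψ : MvPolynomial (Fin n) ℝ} (hΨ : Ψ.IsHomogeneous m)
    {g : ℝ → ℝ} (hg : ContDiff ℝ m g) :
    polyOp Ψ (fun y => g (∑ i, y i ^ 2)) = hobsonSum g m Ψ := by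
  have h_monomial (p : Fin n →₀ ℕ) (hp : p ∈ Ψ.support) :
      monOp p (fun y => g (∑ i, y i ^ 2)) = hobsonSum g m (monomial p 1) := by
    obtain rfl : (multiIndexWord p).length = m :=
      (length_multiIndexWord p).trans (hΨ.degree_eq_sum_deg_support hp).symm
    rw [monOp_eq_foldr_pd, foldr_pd_comp_sum_sq _ hg, prod_map_X_multiIndexWord]
  ext x
  calc polyOp Ψ (fun y => g (∑ i, y i ^ 2)) x
      = ∑ p ∈ Ψ.support, Ψ.coeff p * hobsonSum g m (monomial p 1) x :=
        Finset.sum_congr rfl fun p hp => by rw [h_monomial p hp]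
    _ = hobsonSum g m (∑ p ∈ Ψ.support, Ψ.coeff p • monomial p 1) x := by
        simp only [map_sum, map_smul, Finset.sum_apply, Pi.smul_apply, smul_eq_mul]
    _ = hobsonSum g m Ψ x := by
        simp only [smul_monomial, smul_eq_mul, mul_one, ← Ψ.as_sum]

lemma hobsonSum_apply_of_mvLaplacian_eq_zero (g : ℝ → ℝ) (d : ℕ) {P : MvPolynomial (Fin n) ℝ}
    (hP : mvLaplacian P = 0) (x : EuclideanSpace ℝ (Fin n)) :
    hobsonSum g d P x =
      eval (fun i => x i) P * (2 ^ d * iteratedDeriv d g (∑ i, x i ^ 2)) := by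
  have h_pow (a : ℕ) : (mvLaplacian ^ (a + 1)) P = 0 := by
    rw [pow_succ, Module.End.mul_apply, hP, map_zero]
  rw [hobsonSum_apply, Finset.sum_eq_single (0, d)]
  · simp only [hobsonCoeff, pow_zero, Module.End.one_apply, Nat.factorial_zero]
    ring
  · rintro ⟨_ | a, b⟩ hab hne
    · exact absurd (by simpa using hab) hne
    · simp [h_pow]
  · simp

end Hobson

theorem stmt9_general {n m : ℕ} {Ψ : MvPolynomial (Fin n) ℝ} (hΨhom : Ψ.IsHomogeneous m)
    (hΨharm : mvLap Ψ = 0) {g : ℝ → ℝ} (hg : ContDiff ℝ m g) (x : EuclideanSpace ℝ (Fin n)) :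
    polyOp Ψ (fun y => g (∑ i, y i ^ 2)) x =
      eval (fun i => x i) Ψ * (2 ^ m * iteratedDeriv m g (∑ i, x i ^ 2)) := by
  rw [polyOp_comp_sum_sq hΨhom hg]
  exact hobsonSum_apply_of_mvLaplacian_eq_zero g m ((mvLaplacian_apply Ψ).trans hΨharm) x

/-- Hecke–Bochner type identity: if `Ψ` is a homogeneous harmonic polynomial of degree
`m` on `ℝⁿ` and `φ(x) = g(|x|²)` is a smooth radial function, then
`Ψ(∂)φ(x) = Ψ(x)·h(|x|²)` for some smooth `h`. -/
theorem stmt9 {n : ℕ} (hn : 2 ≤ n) (m : ℕ) (Ψ : MvPolynomial (Fin n) ℝ)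
    (hΨhom : Ψ.IsHomogeneous m) (hΨharm : mvLap Ψ = 0)
    (g : ℝ → ℝ) (hg : ContDiff ℝ (⊤ : ℕ∞) g) :
    ∃ h : ℝ → ℝ, ContDiff ℝ (⊤ : ℕ∞) h ∧
      ∀ x : EuclideanSpace ℝ (Fin n),
        polyOp Ψ (fun y => g (∑ i, y i ^ 2)) x =
          eval (fun i => x i) Ψ * h (∑ i, x i ^ 2) :=
  ⟨fun t => 2 ^ m * iteratedDeriv m g t,
    contDiff_const.mul (iteratedDeriv_eq_iterate (n := m) (f := g) ▸ hg.iterate_deriv m),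
    stmt9_general hΨhom hΨharm (hg.of_le (by exact_mod_cast le_top))⟩
end
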